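/- Let G be the wiring diagram of s_{i_1} ⋯ s_{i_m}, and write (1 + T_{s_{i_1}}) ⋯ (1 + T_{s_{i_m}}) = Σ_{w ∈ S_n} a_w T_w in the Hecke algebra H_n(q). Then a_w = Σ_π q^{dfct(π)}, where the sum is over all path families π of type w covering G, and dfct(π) is the number of defects of π: indices j such that the two paths meeting at the central vertex of the j-th elementary diagram have previously crossed an odd number of times. -/

import Mathlib

noncomputable section

attribute [local instance] Classical.propDecidable

/-- The adjacent transposition `s_{i+1}` swapping `i` and `i+1` in `S_{n+1}`. -/
def adjT {n : ℕ} (i : Fin n) : Equiv.Perm (Fin (n + 1)) :=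
  Equiv.swap i.castSucc i.succ

/-- Coxeter length: minimal number of adjacent transpositions whose product is `w`. -/
def len {m : ℕ} (w : Equiv.Perm (Fin m)) : ℕ :=
  sInf {k | ∃ l : List (Equiv.Perm (Fin m)), l.length = k ∧
    (∀ s ∈ l, ∃ p : Fin m × Fin m, (p.1 : ℕ) + 1 = (p.2 : ℕ) ∧ s = Equiv.swap p.1 p.2) ∧
    l.prod = w}

/-- Product of the word of generators given by a list of indices. -/
def wordProd {n : ℕ} (l : List (Fin n)) : Equiv.Perm (Fin (n + 1)) :=
  (l.map adjT).prod

/-- `l` is a reduced word for `w`. -/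
def IsRedWord {n : ℕ} (l : List (Fin n)) (w : Equiv.Perm (Fin (n + 1))) : Prop :=
  wordProd l = w ∧ l.length = len w

/-- Bruhat order. -/
def BruhatLE {n : ℕ} (u v : Equiv.Perm (Fin (n + 1))) : Prop :=
  ∀ l : List (Fin n), IsRedWord l v → ∃ l' : List (Fin n), l'.Sublist l ∧ IsRedWord l' u

/-- Left weak order. -/
def WeakLE {n : ℕ} (t u : Equiv.Perm (Fin (n + 1))) : Prop :=
  len u = len (u * t⁻¹) + len t

/-- The base ring `ℤ[q^{1/2}, q^{-1/2}]`, with `T 1 = q^{1/2}`. -/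
abbrev A := LaurentPolynomial ℤ

def qh : A := LaurentPolynomial.T 1
def qhi : A := LaurentPolynomial.T (-1)
def qq : A := LaurentPolynomial.T 2
inductive HRel (n : ℕ) : FreeAlgebra A (Fin n) → FreeAlgebra A (Fin n) → Prop
  | quad (i : Fin n) : HRel n (FreeAlgebra.ι A i * FreeAlgebra.ι A i)
      (algebraMap A _ (qq - 1) * FreeAlgebra.ι A i + algebraMap A _ qq)
  | braid (i j : Fin n) (h : (i : ℕ) + 1 = j ∨ (j : ℕ) + 1 = i) :
      HRel n (FreeAlgebra.ι A i * FreeAlgebra.ι A j * FreeAlgebra.ι A i)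
        (FreeAlgebra.ι A j * FreeAlgebra.ι A i * FreeAlgebra.ι A j)
  | comm (i j : Fin n) (h : (i : ℕ) + 1 < j ∨ (j : ℕ) + 1 < i) :
      HRel n (FreeAlgebra.ι A i * FreeAlgebra.ι A j) (FreeAlgebra.ι A j * FreeAlgebra.ι A i)

/-- The type `A` Hecke algebra `H_{n+1}(q)` (of the symmetric group `S_{n+1}`). -/
abbrev Hecke (n : ℕ) := RingQuot (HRel n)

/-- The generator `T_{s_i}`. -/
def Ts {n : ℕ} (i : Fin n) : Hecke n :=
  RingQuot.mkAlgHom A (HRel n) (FreeAlgebra.ι A i)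

/-- `T_w`, defined via a choice of reduced word for `w`. -/
def Tw {n : ℕ} (w : Equiv.Perm (Fin (n + 1))) : Hecke n :=
  if h : ∃ l : List (Fin n), IsRedWord l w then (h.choose.map Ts).prod else 0

/-- A (bijective) path family covering the wiring diagram of the word `l`,
encoded by the sequence of level assignments `P t : source → level`:
`P 0 = 1`, and at the `j`-th central vertex the two incident wires either cross
or do not cross. Its type is `(P last)⁻¹`, sending each source to its sink. -/
def PathFam {n : ℕ} (l : List (Fin n))
    (P : Fin (l.length + 1) → Equiv.Perm (Fin (n + 1))) : Prop :=
  P 0 = 1 ∧ ∀ j : Fin l.length,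
    P j.succ = adjT (l.get j) * P j.castSucc ∨ P j.succ = P j.castSucc

/-- The type of a covering path family: source `i` is joined to sink `(P last)⁻¹ i`. -/
def famType {n : ℕ} (l : List (Fin n))
    (P : Fin (l.length + 1) → Equiv.Perm (Fin (n + 1))) : Equiv.Perm (Fin (n + 1)) :=
  (P (Fin.last l.length))⁻¹

/-- Whether the `j`-th central vertex is a crossing of the family `P`. -/
def crossAt {n : ℕ} (l : List (Fin n))
    (P : Fin (l.length + 1) → Equiv.Perm (Fin (n + 1))) (j : Fin l.length) : Prop :=
  P j.succ ≠ P j.castSucc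

/-- The (source indices of the) two paths meeting at the `j`-th central vertex. -/
def pathsAt {n : ℕ} (l : List (Fin n))
    (P : Fin (l.length + 1) → Equiv.Perm (Fin (n + 1))) (j : Fin l.length) :
    Fin (n + 1) × Fin (n + 1) :=
  ((P j.castSucc)⁻¹ (l.get j).castSucc, (P j.castSucc)⁻¹ (l.get j).succ)

/-- Equality of unordered pairs. -/
def samePair {n : ℕ} (p q : Fin (n + 1) × Fin (n + 1)) : Prop :=
  p = q ∨ p = (q.2, q.1)

/-- The number of defects of `P`: indices `j` such that the two paths meeting at
the `j`-th central vertex have previously crossed an odd number of times. -/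
def dfct {n : ℕ} (l : List (Fin n))
    (P : Fin (l.length + 1) → Equiv.Perm (Fin (n + 1))) : ℕ :=
  (Finset.univ.filter fun j : Fin l.length =>
    Odd (Finset.univ.filter fun k : Fin l.length =>
      k < j ∧ crossAt l P k ∧ samePair (pathsAt l P k) (pathsAt l P j)).card).card

/-!
Right multiplication by `T_{s_i}` acts on the basis `T_w` by an explicit matrix, and these matrices
satisfy the Hecke relations. Row `1` of the matrix of `T_w` is the unit vector at `w`, because along
a reduced word one only meets ascents; so `a_w` is the entry at `(1, w)` of the product of the
matrices of the factors `1 + T_{s_{i_j}}`. Expanding this product gives a sum over the walks in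
`S_n` that at each step either stay or are multiplied by `s_{i_j}` on the right, with a factor `q`
for each step starting from a permutation with a descent at `i_j`. Inverting the level assignments
of a covering path family gives such a walk, and two paths have crossed an odd number of times
exactly when they are in inverted order, so that the descents are the defects.
-/

section AdjacentTranspositions

variable {n : ℕ}

theorem adjT_val (i : Fin n) (x : Fin (n + 1)) :
    (adjT i x : ℕ) =
      if (x : ℕ) = i then (i : ℕ) + 1 else if (x : ℕ) = i + 1 then (i : ℕ) else x := by
  simp only [adjT, Equiv.swap_apply_def, Fin.ext_iff, Fin.val_castSucc, Fin.val_succ]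
  split_ifs <;> simp

theorem adjT_mul_self (i : Fin n) : adjT i * adjT i = 1 :=
  Equiv.swap_mul_self _ _

theorem adjT_inv (i : Fin n) : (adjT i)⁻¹ = adjT i :=
  Equiv.swap_inv _ _

theorem adjT_castSucc (i : Fin n) : adjT i i.castSucc = i.succ :=
  Equiv.swap_apply_left _ _

theorem adjT_succ (i : Fin n) : adjT i i.succ = i.castSucc :=
  Equiv.swap_apply_right _ _

theorem adjT_ne_one (i : Fin n) : adjT i ≠ 1 := fun h =>
  i.castSucc_lt_succ.ne (Equiv.swap_eq_one_iff.1 h)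

theorem mul_adjT_ne (u : Equiv.Perm (Fin (n + 1))) (i : Fin n) : u * adjT i ≠ u := fun h =>
  adjT_ne_one i (mul_eq_left.1 h)

theorem mul_adjT_mul_adjT (u : Equiv.Perm (Fin (n + 1))) (i : Fin n) :
    u * adjT i * adjT i = u := by
  rw [mul_assoc, adjT_mul_self, mul_one]

theorem mul_adjT_comm (w : Equiv.Perm (Fin (n + 1))) {i j : Fin n}
    (h : (i : ℕ) + 1 < j ∨ (j : ℕ) + 1 < i) :
    w * adjT i * adjT j = w * adjT j * adjT i := by
  simp only [mul_assoc, mul_right_inj]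
  ext x
  simp only [Equiv.Perm.mul_apply, adjT_val]
  split_ifs <;> omega

theorem mul_adjT_braid (w : Equiv.Perm (Fin (n + 1))) {i j : Fin n} (h : i.succ = j.castSucc) :
    w * adjT i * adjT j * adjT i = w * adjT j * adjT i * adjT j := by
  have hij : i.castSucc ≠ i.succ := i.castSucc_lt_succ.ne
  have hik : i.castSucc ≠ j.succ := (i.castSucc_lt_succ.trans (h ▸ j.castSucc_lt_succ)).ne
  have hjk : j.succ ≠ i.succ := (h ▸ j.castSucc_lt_succ).ne'
  have hi : adjT i * adjT j * adjT i = Equiv.swap i.castSucc j.succ := by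
    rw [adjT, adjT, ← h, Equiv.swap_comm i.castSucc, Equiv.swap_comm i.succ j.succ]
    exact Equiv.swap_mul_swap_mul_swap hjk hik.symm
  have hj : adjT j * adjT i * adjT j = Equiv.swap i.castSucc j.succ := by
    rw [adjT, adjT, ← h, Equiv.swap_comm i.castSucc j.succ]
    exact Equiv.swap_mul_swap_mul_swap hij hik
  simpa only [mul_assoc, mul_right_inj] using hi.trans hj.symm

theorem adjT_lt_adjT_iff (i : Fin n) {x y : Fin (n + 1)} :
    adjT i x < adjT i y ↔ Xor (s(x, y) = s(i.castSucc, i.succ)) (x < y) := by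
  have hi := i.castSucc_lt_succ
  by_cases h : s(x, y) = s(i.castSucc, i.succ)
  · rw [iff_true_intro h, xor_true]
    obtain ⟨rfl, rfl⟩ | ⟨rfl, rfl⟩ := Sym2.eq_iff.1 h
    · rw [adjT_castSucc, adjT_succ]
      exact iff_of_false hi.not_gt (not_not_intro hi)
    · rw [adjT_castSucc, adjT_succ]
      exact iff_of_true hi hi.not_gt
  · rw [iff_false_intro h, xor_false]
    simp only [Sym2.eq_iff, Fin.ext_iff, Fin.val_castSucc, Fin.val_succ] at h
    simp only [Fin.lt_def, adjT_val, id]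
    split_ifs <;> omega

end AdjacentTranspositions

section Descents

variable {n : ℕ}

/-- `w` has a (right) descent at `i`, that is, `w s_i` is shorter than `w`. -/
def IsDescent (w : Equiv.Perm (Fin (n + 1))) (i : Fin n) : Prop :=
  w i.succ < w i.castSucc

theorem not_isDescent_iff {w : Equiv.Perm (Fin (n + 1))} {i : Fin n} :
    ¬ IsDescent w i ↔ w i.castSucc < w i.succ :=
  not_lt.trans (w.injective.ne i.castSucc_lt_succ.ne).le_iff_lt

theorem isDescent_mul_adjT_iff (w : Equiv.Perm (Fin (n + 1))) (i : Fin n) :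
    IsDescent (w * adjT i) i ↔ ¬ IsDescent w i := by
  rw [not_isDescent_iff, IsDescent, Equiv.Perm.mul_apply, Equiv.Perm.mul_apply, adjT_castSucc,
    adjT_succ]

theorem isDescent_mul_adjT_iff_of_comm (w : Equiv.Perm (Fin (n + 1))) {i j : Fin n}
    (h : (i : ℕ) + 1 < j ∨ (j : ℕ) + 1 < i) : IsDescent (w * adjT i) j ↔ IsDescent w j := by
  have h_castSucc : adjT i j.castSucc = j.castSucc := by
    refine Equiv.swap_apply_of_ne_of_ne ?_ ?_ <;>
      simp only [ne_eq, Fin.ext_iff, Fin.val_castSucc, Fin.val_succ] <;> omega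
  have h_succ : adjT i j.succ = j.succ := by
    refine Equiv.swap_apply_of_ne_of_ne ?_ ?_ <;>
      simp only [ne_eq, Fin.ext_iff, Fin.val_castSucc, Fin.val_succ] <;> omega
  rw [IsDescent, IsDescent, Equiv.Perm.mul_apply, Equiv.Perm.mul_apply, h_castSucc, h_succ]

theorem eq_one_of_forall_not_isDescent {w : Equiv.Perm (Fin (n + 1))}
    (h : ∀ i, ¬ IsDescent w i) : w = 1 :=
  w.monotone_iff.1 <| Fin.monotone_iff_le_succ.2 fun i => not_lt.1 (h i)

end Descents

section Length

variable {n : ℕ}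

/-- The inversion set of a permutation, as a set of pairs of positions. Its cardinality is the
Coxeter length. -/
def inversions {α : Type*} [Fintype α] [LT α] (w : Equiv.Perm α) : Finset (α × α) :=
  Finset.univ.filter fun p => p.1 < p.2 ∧ w p.2 < w p.1

theorem mem_inversions {α : Type*} [Fintype α] [LT α] {w : Equiv.Perm α} {p : α × α} :
    p ∈ inversions w ↔ p.1 < p.2 ∧ w p.2 < w p.1 :=
  Finset.mem_filter_univ p

theorem inversions_one {α : Type*} [Fintype α] [Preorder α] :
    inversions (1 : Equiv.Perm α) = ∅ :=
  Finset.filter_false_of_mem fun _ _ h => h.1.not_gt h.2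

theorem mk_mem_inversions_iff_isDescent {w : Equiv.Perm (Fin (n + 1))} {i : Fin n} :
    (i.castSucc, i.succ) ∈ inversions w ↔ IsDescent w i :=
  mem_inversions.trans (and_iff_right i.castSucc_lt_succ)

theorem inversions_mul_adjT {w : Equiv.Perm (Fin (n + 1))} {i : Fin n} (h : IsDescent w i) :
    inversions (w * adjT i) = ((inversions w).erase (i.castSucc, i.succ)).map
      ((adjT i).prodCongr (adjT i)).toEmbedding := by
  have hi := i.castSucc_lt_succ
  ext ⟨x, y⟩
  rw [Finset.mem_map_equiv, Finset.mem_erase, mem_inversions, mem_inversions]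
  change x < y ∧ w (adjT i y) < w (adjT i x) ↔
    (adjT i x, adjT i y) ≠ (i.castSucc, i.succ) ∧ adjT i x < adjT i y ∧
      w (adjT i y) < w (adjT i x)
  by_cases hxy : s(x, y) = s(i.castSucc, i.succ)
  · obtain ⟨rfl, rfl⟩ | ⟨rfl, rfl⟩ := Sym2.eq_iff.1 hxy <;>
      rw [adjT_castSucc, adjT_succ]
    · exact iff_of_false (fun h' => h.not_gt h'.2) fun h' => hi.not_gt h'.2.1
    · exact iff_of_false (fun h' => hi.not_gt h'.1) fun h' => h'.1 rfl
  · have hne : (adjT i x, adjT i y) ≠ (i.castSucc, i.succ) := by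
      intro h'
      obtain ⟨hx, hy⟩ := Prod.mk.inj h'
      exact hxy <| Sym2.eq_iff.2 <| .inr ⟨(adjT i).injective (hx.trans (adjT_succ i).symm),
        (adjT i).injective (hy.trans (adjT_castSucc i).symm)⟩
    rw [adjT_lt_adjT_iff, iff_false_intro hxy, xor_false, id, and_iff_right hne]

theorem card_inversions_of_isDescent {w : Equiv.Perm (Fin (n + 1))} {i : Fin n}
    (h : IsDescent w i) : (inversions w).card = (inversions (w * adjT i)).card + 1 := by
  rw [inversions_mul_adjT h, Finset.card_map,
    Finset.card_erase_add_one (mk_mem_inversions_iff_isDescent.2 h)]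

theorem card_inversions_of_not_isDescent {w : Equiv.Perm (Fin (n + 1))} {i : Fin n}
    (h : ¬ IsDescent w i) : (inversions (w * adjT i)).card = (inversions w).card + 1 := by
  rw [card_inversions_of_isDescent ((isDescent_mul_adjT_iff w i).2 h), mul_adjT_mul_adjT]

theorem wordProd_concat (l : List (Fin n)) (i : Fin n) :
    wordProd (l ++ [i]) = wordProd l * adjT i := by
  simp only [wordProd, List.map_append, List.map_cons, List.map_nil, List.prod_append,
    List.prod_singleton]

theorem card_inversions_wordProd_le (l : List (Fin n)) :
    (inversions (wordProd l)).card ≤ l.length := by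
  induction l using List.reverseRecOn with
  | nil => exact (congrArg Finset.card inversions_one).le
  | append_singleton l i ih =>
    rw [wordProd_concat, List.length_append, List.length_singleton]
    by_cases h : IsDescent (wordProd l) i
    · have := card_inversions_of_isDescent h
      omega
    · rw [card_inversions_of_not_isDescent h]
      omega

theorem exists_word_length_eq_card_inversions (w : Equiv.Perm (Fin (n + 1))) :
    ∃ l : List (Fin n), wordProd l = w ∧ l.length = (inversions w).card := by
  induction hk : (inversions w).card generalizing w with
  | zero =>
    refine ⟨[], (eq_one_of_forall_not_isDescent fun i hi => ?_).symm, rfl⟩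
    exact Nat.succ_ne_zero _ ((card_inversions_of_isDescent hi).symm.trans hk)
  | succ k ih =>
    obtain ⟨i, hi⟩ : ∃ i, IsDescent w i := by
      by_contra! h
      rw [eq_one_of_forall_not_isDescent h, inversions_one] at hk
      exact Nat.succ_ne_zero k hk.symm
    obtain ⟨l, hl, hlen⟩ := ih (w * adjT i)
      (Nat.succ_injective ((card_inversions_of_isDescent hi).symm.trans hk))
    refine ⟨l ++ [i], ?_, by rw [List.length_append, hlen, List.length_singleton]⟩
    rw [wordProd_concat, hl, mul_adjT_mul_adjT]

theorem mem_range_adjT_iff {s : Equiv.Perm (Fin (n + 1))} :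
    s ∈ Set.range (adjT (n := n)) ↔
      ∃ p : Fin (n + 1) × Fin (n + 1), (p.1 : ℕ) + 1 = p.2 ∧ s = Equiv.swap p.1 p.2 := by
  constructor
  · rintro ⟨i, rfl⟩
    exact ⟨(i.castSucc, i.succ), rfl, rfl⟩
  · rintro ⟨⟨x, y⟩, hxy : (x : ℕ) + 1 = y, rfl⟩
    refine ⟨⟨x, by omega⟩, ?_⟩
    rw [adjT]
    congr 1
    exact Fin.ext hxy

theorem len_eq_card_inversions (w : Equiv.Perm (Fin (n + 1))) :
    len w = (inversions w).card := by
  refine IsLeast.csInf_eq ⟨?_, ?_⟩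
  · obtain ⟨l, hl, hlen⟩ := exists_word_length_eq_card_inversions w
    refine ⟨l.map adjT, by rw [List.length_map, hlen], ?_, hl⟩
    exact List.forall_mem_map.2 fun i _ => mem_range_adjT_iff.1 ⟨i, rfl⟩
  · rintro _ ⟨l, rfl, hl, rfl⟩
    obtain ⟨l, rfl⟩ : l ∈ Set.range (List.map adjT) := by
      rw [Set.range_list_map]
      exact fun s hs => mem_range_adjT_iff.2 (hl s hs)
    rw [List.length_map]
    exact card_inversions_wordProd_le l

theorem isRedWord_iff {l : List (Fin n)} {w : Equiv.Perm (Fin (n + 1))} :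
    IsRedWord l w ↔ wordProd l = w ∧ l.length = (inversions w).card := by
  rw [IsRedWord, len_eq_card_inversions]

theorem exists_isRedWord (w : Equiv.Perm (Fin (n + 1))) : ∃ l : List (Fin n), IsRedWord l w := by
  simp only [isRedWord_iff]
  exact exists_word_length_eq_card_inversions w

theorem IsRedWord.of_concat {l : List (Fin n)} {i : Fin n} {w : Equiv.Perm (Fin (n + 1))}
    (h : IsRedWord (l ++ [i]) w) : IsRedWord l (wordProd l) ∧ ¬ IsDescent (wordProd l) i := by
  obtain ⟨rfl, hlen⟩ := isRedWord_iff.1 h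
  rw [wordProd_concat, List.length_append, List.length_singleton] at hlen
  have hle := card_inversions_wordProd_le l
  rw [isRedWord_iff]
  by_cases hi : IsDescent (wordProd l) i
  · have := card_inversions_of_isDescent hi
    omega
  · rw [card_inversions_of_not_isDescent hi] at hlen
    exact ⟨⟨rfl, by omega⟩, hi⟩

end Length

section TransferMatrices

variable {n : ℕ} {R : Type*} [CommSemiring R] (q : R)

/-- The weight `q` or `1` of the central vertex of `G_{[i,i+1]}` for a path family whose crossings
so far compose to `u`: a defect is the same thing as a descent of `u` at `i`. -/
def stepWeight (u : Equiv.Perm (Fin (n + 1))) (i : Fin n) : R :=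
  if IsDescent u i then q else 1

/-- The transfer matrix of `G_{[i,i+1]}`, which is also the matrix of right multiplication by
`1 + T_{s_i}` on the basis `T_w`, acting on row vectors. -/
def stepMatrix (i : Fin n) :
    Matrix (Equiv.Perm (Fin (n + 1))) (Equiv.Perm (Fin (n + 1))) R :=
  .of fun u v => if v = u ∨ v = u * adjT i then stepWeight q u i else 0

theorem stepMatrix_mulVec (i : Fin n) (f : Equiv.Perm (Fin (n + 1)) → R)
    (u : Equiv.Perm (Fin (n + 1))) :
    (stepMatrix q i).mulVec f u = stepWeight q u i * (f u + f (u * adjT i)) := by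
  have hpair : Finset.univ.filter (fun v => v = u ∨ v = u * adjT i) = {u, u * adjT i} := by
    ext v
    rw [Finset.mem_filter_univ, Finset.mem_insert, Finset.mem_singleton]
  simp only [Matrix.mulVec, dotProduct, stepMatrix, Matrix.of_apply, ite_mul, zero_mul]
  rw [← Finset.sum_filter, hpair, Finset.sum_pair (mul_adjT_ne u i).symm, mul_add]

end TransferMatrices

section RegularRepresentation

variable {n : ℕ} {R : Type*} [CommRing R] (q : R)

/-- The matrix of right multiplication by `T_{s_i}` on the basis `T_w`, acting on row vectors. -/
def genMatrix (i : Fin n) :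
    Matrix (Equiv.Perm (Fin (n + 1))) (Equiv.Perm (Fin (n + 1))) R :=
  stepMatrix q i - 1

theorem genMatrix_mulVec (i : Fin n) (f : Equiv.Perm (Fin (n + 1)) → R)
    (u : Equiv.Perm (Fin (n + 1))) :
    (genMatrix q i).mulVec f u =
      stepWeight q u i * f (u * adjT i) + (stepWeight q u i - 1) * f u := by
  rw [genMatrix, Matrix.sub_mulVec, Matrix.one_mulVec, Pi.sub_apply, stepMatrix_mulVec]
  ring

theorem genMatrix_row_of_not_isDescent {u : Equiv.Perm (Fin (n + 1))} {i : Fin n}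
    (h : ¬ IsDescent u i) : (genMatrix q i).row u = Pi.single (u * adjT i) 1 := by
  funext v
  have hne := mul_adjT_ne u i
  rw [Matrix.row_apply, genMatrix, stepMatrix, Matrix.sub_apply, Matrix.of_apply, stepWeight,
    if_neg h, Matrix.one_apply, Pi.single_apply]
  by_cases hv : v = u
  · simp [hv, hne.symm]
  · simp [hv, Ne.symm hv]

theorem genMatrix_mul_self (i : Fin n) :
    genMatrix q i * genMatrix q i = (q - 1) • genMatrix q i + q • 1 := by
  refine Matrix.mulVec_injective (funext fun f => funext fun u => ?_)
  simp only [← Matrix.mulVec_mulVec, Matrix.add_mulVec, Matrix.smul_mulVec, Matrix.one_mulVec,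
    Pi.add_apply, Pi.smul_apply, smul_eq_mul, genMatrix_mulVec, stepWeight,
    isDescent_mul_adjT_iff, mul_adjT_mul_adjT]
  split_ifs <;> ring

theorem genMatrix_comm {i j : Fin n} (h : (i : ℕ) + 1 < j ∨ (j : ℕ) + 1 < i) :
    genMatrix q i * genMatrix q j = genMatrix q j * genMatrix q i := by
  refine Matrix.mulVec_injective (funext fun f => funext fun u => ?_)
  simp only [← Matrix.mulVec_mulVec, genMatrix_mulVec, stepWeight,
    isDescent_mul_adjT_iff_of_comm u h, isDescent_mul_adjT_iff_of_comm u h.symm,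
    mul_adjT_comm u h]
  ring

theorem genMatrix_braid {i j : Fin n} (h : i.succ = j.castSucc) :
    genMatrix q i * genMatrix q j * genMatrix q i =
      genMatrix q j * genMatrix q i * genMatrix q j := by
  have hij : i.castSucc < j.castSucc := h ▸ i.castSucc_lt_succ
  have hjk : j.castSucc < j.succ := j.castSucc_lt_succ
  have hi_castSucc : adjT i i.castSucc = j.castSucc := (adjT_castSucc i).trans h
  have hi_mid : adjT i j.castSucc = i.castSucc := h ▸ adjT_succ i
  have hi_succ : adjT i j.succ = j.succ :=
    Equiv.swap_apply_of_ne_of_ne (hij.trans hjk).ne' (h ▸ hjk.ne')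
  have hj_castSucc : adjT j i.castSucc = i.castSucc :=
    Equiv.swap_apply_of_ne_of_ne hij.ne (hij.trans hjk).ne
  refine Matrix.mulVec_injective (funext fun f => funext fun u => ?_)
  -- Both sides are combinations of values of `f` on a coset of `⟨s_i, s_j⟩`, with coefficients
  -- depending only on the relative order of the three values of `u` at `i`, `j` and `j + 1`.
  simp only [← Matrix.mulVec_mulVec, genMatrix_mulVec, stepWeight, IsDescent, h,
    Equiv.Perm.mul_apply, mul_adjT_braid u h, mul_adjT_mul_adjT, hi_castSucc, hi_mid, hi_succ,
    hj_castSucc, adjT_castSucc j, adjT_succ j]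
  rcases (u.injective.ne hij.ne).lt_or_gt with hxy | hxy <;>
    rcases (u.injective.ne hjk.ne).lt_or_gt with hyz | hyz <;>
    rcases (u.injective.ne (hij.trans hjk).ne).lt_or_gt with hxz | hxz <;>
    first
    | (exfalso; order)
    | (simp only [hxy, hyz, hxz, hxy.not_gt, hyz.not_gt, hxz.not_gt, if_true, if_false]
       ring)

theorem lift_genMatrix_eq_of_hRel {x y : FreeAlgebra A (Fin n)} (h : HRel n x y) :
    FreeAlgebra.lift A (genMatrix qq) x = FreeAlgebra.lift A (genMatrix qq) y := by
  induction h with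
  | quad i =>
    simp only [map_mul, map_add, FreeAlgebra.lift_ι_apply, AlgHom.commutes, genMatrix_mul_self,
      Algebra.smul_def, mul_one]
  | braid i j h =>
    simp only [map_mul, FreeAlgebra.lift_ι_apply]
    obtain h | h := h
    · exact genMatrix_braid qq (Fin.ext h)
    · exact (genMatrix_braid qq (Fin.ext h)).symm
  | comm i j h =>
    simp only [map_mul, FreeAlgebra.lift_ι_apply, genMatrix_comm qq h]

/-- The right regular representation of the Hecke algebra: matrices in the basis `T_w`, acting on
row vectors, so that products are not reversed. -/
def regularRep (n : ℕ) :
    Hecke n →ₐ[A] Matrix (Equiv.Perm (Fin (n + 1))) (Equiv.Perm (Fin (n + 1))) A :=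
  RingQuot.liftAlgHom A ⟨FreeAlgebra.lift A (genMatrix qq), fun _ _ => lift_genMatrix_eq_of_hRel⟩

theorem regularRep_Ts (i : Fin n) : regularRep n (Ts i) = genMatrix qq i := by
  rw [regularRep, Ts, RingQuot.liftAlgHom_mkAlgHom_apply, FreeAlgebra.lift_ι_apply]

theorem regularRep_one_add_Ts (i : Fin n) : regularRep n (1 + Ts i) = stepMatrix qq i := by
  rw [map_add, map_one, regularRep_Ts, genMatrix, add_sub_cancel]

theorem regularRep_prod_Ts_row_one {l : List (Fin n)} (h : IsRedWord l (wordProd l)) :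
    (regularRep n (l.map Ts).prod).row 1 = Pi.single (wordProd l) 1 := by
  induction l using List.reverseRecOn with
  | nil =>
    rw [List.map_nil, List.prod_nil, map_one]
    funext v
    rw [Matrix.row_apply, Matrix.one_eq_pi_single]
    rfl
  | append_singleton l i ih =>
    obtain ⟨hl, hi⟩ := h.of_concat
    calc (regularRep n ((l ++ [i]).map Ts).prod).row 1
        = Matrix.vecMul ((regularRep n (l.map Ts).prod).row 1) (genMatrix qq i) := by
          rw [List.map_append, List.prod_append, map_mul, List.map_singleton,
            List.prod_singleton, regularRep_Ts]
          exact Matrix.mul_apply_eq_vecMul _ _ _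
      _ = Pi.single (wordProd (l ++ [i])) 1 := by
          rw [ih hl, Matrix.single_one_vecMul, genMatrix_row_of_not_isDescent qq hi,
            wordProd_concat]

theorem regularRep_Tw_row_one (w : Equiv.Perm (Fin (n + 1))) :
    (regularRep n (Tw w)).row 1 = Pi.single w 1 := by
  have h := (exists_isRedWord w).choose_spec
  rw [Tw, dif_pos (exists_isRedWord w), regularRep_prod_Ts_row_one (h.1.symm ▸ h), h.1]

theorem regularRep_sum_smul_Tw_row_one (a : Equiv.Perm (Fin (n + 1)) → A) :
    (regularRep n (∑ v, a v • Tw v)).row 1 = a := by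
  funext w
  calc regularRep n (∑ v, a v • Tw v) 1 w
      = ∑ v, a v * (regularRep n (Tw v)).row 1 w := by
        simp only [map_sum, map_smul, Matrix.sum_apply, Matrix.smul_apply, smul_eq_mul,
          Matrix.row_apply]
    _ = a w := by
        simp only [regularRep_Tw_row_one, Pi.single_apply, mul_ite, mul_one, mul_zero,
          Fintype.sum_ite_eq]

end RegularRepresentation

section Walks

theorem prod_ofFn_mulVec {X R : Type*} [Fintype X] [DecidableEq X] [CommSemiring R] {m : ℕ}
    (M : Fin m → Matrix X X R) (f : X → R) (u : X) :
    (List.ofFn M).prod.mulVec f u =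
      ∑ P : Fin (m + 1) → X with P 0 = u,
        (∏ j, M j (P j.castSucc) (P j.succ)) * f (P (Fin.last m)) := by
  simp only [Finset.sum_filter]
  induction m generalizing u with
  | zero =>
    rw [← (Equiv.funUnique (Fin 1) X).symm.sum_comp]
    simp
  | succ m ih =>
    rw [List.ofFn_succ, List.prod_cons, ← Matrix.mulVec_mulVec,
      ← (Fin.consEquiv fun _ => X).sum_comp, Fintype.sum_prod_type]
    calc (M 0).mulVec ((List.ofFn fun j => M j.succ).prod.mulVec f) u
        = ∑ v, M 0 u v * (List.ofFn fun j => M j.succ).prod.mulVec f v := rfl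
      _ = ∑ v, ∑ P : Fin (m + 1) → X, if P 0 = v then M 0 u v *
            ((∏ j : Fin m, M j.succ (P j.castSucc) (P j.succ)) * f (P (Fin.last m))) else 0 := by
          simp only [ih, Finset.mul_sum, mul_ite, mul_zero]
      _ = ∑ P : Fin (m + 1) → X, M 0 u (P 0) *
            ((∏ j : Fin m, M j.succ (P j.castSucc) (P j.succ)) * f (P (Fin.last m))) := by
          rw [Finset.sum_comm]
          simp only [Fintype.sum_ite_eq]
      _ = _ := by
          rw [Finset.sum_comm]
          simp [Fin.prod_univ_succ, mul_assoc, ← Fin.succ_last]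

theorem prod_ofFn_apply {X R : Type*} [Fintype X] [DecidableEq X] [CommSemiring R] {m : ℕ}
    (M : Fin m → Matrix X X R) (u v : X) :
    (List.ofFn M).prod u v =
      ∑ P : Fin (m + 1) → X with P 0 = u ∧ P (Fin.last m) = v,
        ∏ j, M j (P j.castSucc) (P j.succ) := by
  rw [← Matrix.col_apply (List.ofFn M).prod, ← Matrix.mulVec_single_one, prod_ofFn_mulVec]
  simp only [Pi.single_apply, mul_ite, mul_one, mul_zero, ← Finset.sum_filter, Finset.filter_filter]

end Walks

section Defects

variable {n : ℕ}

theorem samePair_iff {p q : Fin (n + 1) × Fin (n + 1)} :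
    samePair p q ↔ s(p.1, p.2) = s(q.1, q.2) :=
  Sym2.mk_eq_mk_iff.symm

/-- The crossings, before level assignment `t`, between the two paths with sources `p`. -/
def crossingsBefore (l : List (Fin n)) (P : Fin (l.length + 1) → Equiv.Perm (Fin (n + 1)))
    (t : Fin (l.length + 1)) (p : Fin (n + 1) × Fin (n + 1)) : Finset (Fin l.length) :=
  Finset.univ.filter fun k => k.castSucc < t ∧ crossAt l P k ∧ samePair (pathsAt l P k) p

variable {l : List (Fin n)} {P : Fin (l.length + 1) → Equiv.Perm (Fin (n + 1))}

theorem samePair_pathsAt_iff {j : Fin l.length} {p : Fin (n + 1) × Fin (n + 1)} :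
    samePair (pathsAt l P j) p ↔
      s(P j.castSucc p.1, P j.castSucc p.2) = s((l.get j).castSucc, (l.get j).succ) := by
  rw [samePair_iff, pathsAt, ← (Sym2.map.injective (P j.castSucc).injective).eq_iff, eq_comm]
  simp only [Sym2.map_mk, Equiv.Perm.coe_inv, Equiv.apply_symm_apply]

theorem odd_card_crossingsBefore_succ (j : Fin l.length) (p : Fin (n + 1) × Fin (n + 1)) :
    Odd (crossingsBefore l P j.succ p).card ↔
      Xor (crossAt l P j ∧ samePair (pathsAt l P j) p)
        (Odd (crossingsBefore l P j.castSucc p).card) := by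
  have hlt (k : Fin l.length) : k.castSucc < j.succ ↔ k = j ∨ k.castSucc < j.castSucc := by
    rw [Fin.castSucc_lt_succ_iff, Fin.castSucc_lt_castSucc_iff, le_iff_eq_or_lt]
  by_cases h : crossAt l P j ∧ samePair (pathsAt l P j) p
  · have hinsert : crossingsBefore l P j.succ p = insert j (crossingsBefore l P j.castSucc p) := by
      ext k
      simp only [crossingsBefore, Finset.mem_filter_univ, Finset.mem_insert, hlt, or_and_right]
      exact or_congr_left (and_iff_left_of_imp fun hk => hk ▸ h)
    have hnotMem : j ∉ crossingsBefore l P j.castSucc p := fun hj =>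
      lt_irrefl _ (Finset.mem_filter.1 hj).2.1
    rw [iff_true_intro h, xor_true, hinsert, Finset.card_insert_of_notMem hnotMem, Nat.odd_add_one]
  · have heq : crossingsBefore l P j.succ p = crossingsBefore l P j.castSucc p := by
      ext k
      simp only [crossingsBefore, Finset.mem_filter_univ, hlt, or_and_right]
      exact or_iff_right fun hk => h (hk.1 ▸ hk.2)
    rw [iff_false_intro h, xor_false, id, heq]

theorem PathFam.apply_succ (hP : PathFam l P) (j : Fin l.length) :
    P j.succ = if crossAt l P j then adjT (l.get j) * P j.castSucc else P j.castSucc := by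
  split_ifs with h
  · exact (hP.2 j).resolve_right h
  · exact not_not.1 h

theorem PathFam.apply_succ_lt_iff (hP : PathFam l P) (j : Fin l.length)
    (p : Fin (n + 1) × Fin (n + 1)) :
    P j.succ p.2 < P j.succ p.1 ↔
      Xor (crossAt l P j ∧ samePair (pathsAt l P j) p)
        (P j.castSucc p.2 < P j.castSucc p.1) := by
  rw [hP.apply_succ, samePair_pathsAt_iff]
  by_cases h : crossAt l P j
  · rw [if_pos h, Equiv.Perm.mul_apply, Equiv.Perm.mul_apply, adjT_lt_adjT_iff, Sym2.eq_swap,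
      and_iff_right h]
  · rw [if_neg h, iff_false_intro fun h' : crossAt l P j ∧ _ => h h'.1, xor_false, id]

theorem PathFam.odd_card_crossingsBefore_iff (hP : PathFam l P) (t : Fin (l.length + 1))
    {p : Fin (n + 1) × Fin (n + 1)} (hp : p.1 < p.2) :
    Odd (crossingsBefore l P t p).card ↔ P t p.2 < P t p.1 := by
  induction t using Fin.induction with
  | zero =>
    rw [hP.1]
    simp [crossingsBefore, hp.le]
  | succ j ih => rw [odd_card_crossingsBefore_succ, hP.apply_succ_lt_iff, ih]

theorem crossingsBefore_swap (t : Fin (l.length + 1)) (p : Fin (n + 1) × Fin (n + 1)) :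
    crossingsBefore l P t p.swap = crossingsBefore l P t p := by
  simp only [crossingsBefore, samePair_iff, Prod.fst_swap, Prod.snd_swap, Sym2.eq_swap (a := p.2)]

theorem PathFam.odd_card_crossingsBefore_pathsAt_iff (hP : PathFam l P) (j : Fin l.length) :
    Odd (crossingsBefore l P j.castSucc (pathsAt l P j)).card ↔
      IsDescent (P j.castSucc)⁻¹ (l.get j) := by
  have hP_inv (x : Fin (n + 1)) : P j.castSucc ((P j.castSucc)⁻¹ x) = x :=
    Equiv.apply_symm_apply _ x
  by_cases h : IsDescent (P j.castSucc)⁻¹ (l.get j)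
  · rw [← crossingsBefore_swap, hP.odd_card_crossingsBefore_iff (p := (pathsAt l P j).swap) _ h,
      iff_true_right h]
    simpa only [pathsAt, Prod.swap, hP_inv] using (l.get j).castSucc_lt_succ
  · rw [hP.odd_card_crossingsBefore_iff (p := pathsAt l P j) _ (not_isDescent_iff.1 h),
      iff_false_right h]
    simpa only [pathsAt, hP_inv, not_lt] using (l.get j).castSucc_lt_succ.le

variable {R : Type*} [CommSemiring R] (q : R)

theorem PathFam.prod_stepWeight (hP : PathFam l P) :
    ∏ j, stepWeight q (P j.castSucc)⁻¹ (l.get j) = q ^ dfct l P := by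
  simp only [stepWeight, ← hP.odd_card_crossingsBefore_pathsAt_iff]
  rw [Finset.prod_ite, Finset.prod_const, Finset.prod_const_one, mul_one]
  rfl

theorem prod_stepMatrix_inv (h : P 0 = 1) :
    ∏ j, stepMatrix q (l.get j) (P j.castSucc)⁻¹ (P j.succ)⁻¹ =
      if PathFam l P then q ^ dfct l P else 0 := by
  have hstep (j : Fin l.length) :
      (P j.succ)⁻¹ = (P j.castSucc)⁻¹ ∨ (P j.succ)⁻¹ = (P j.castSucc)⁻¹ * adjT (l.get j) ↔
        P j.succ = adjT (l.get j) * P j.castSucc ∨ P j.succ = P j.castSucc := by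
    rw [or_comm, inv_inj, inv_eq_iff_eq_inv, mul_inv_rev, inv_inv, adjT_inv]
  have hfam : (∀ j ∈ Finset.univ, P j.succ = adjT (l.get j) * P j.castSucc ∨
      P j.succ = P j.castSucc) ↔ PathFam l P := by
    rw [PathFam, and_iff_right h]
    simp only [Finset.mem_univ, true_imp_iff]
  simp only [stepMatrix, Matrix.of_apply, hstep]
  rw [Finset.prod_ite_zero]
  simp only [hfam]
  exact if_ctx_congr Iff.rfl (fun hP => hP.prod_stepWeight q) fun _ => rfl

theorem prod_stepMatrix_eq_defect_sum (l : List (Fin n)) (w : Equiv.Perm (Fin (n + 1))) :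
    (l.map (stepMatrix q)).prod 1 w =
      ∑ P : Fin (l.length + 1) → Equiv.Perm (Fin (n + 1)) with PathFam l P ∧ famType l P = w,
        q ^ dfct l P := by
  have hofFn : l.map (stepMatrix q) = List.ofFn fun j => stepMatrix q (l.get j) := by
    rw [← Function.comp_def (stepMatrix q), ← List.map_ofFn, List.ofFn_get]
  rw [hofFn, prod_ofFn_apply, Finset.sum_filter, ← Equiv.sum_comp (Equiv.inv _),
    Finset.sum_filter]
  refine Finset.sum_congr rfl fun P _ => ?_
  simp only [Equiv.inv_apply, Pi.inv_apply, inv_eq_one]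
  by_cases h : P 0 = 1
  · simp only [prod_stepMatrix_inv q h, h, true_and, ← ite_and]
    exact if_congr and_comm rfl rfl
  · rw [if_neg fun h' => h h'.1, if_neg fun h' => h h'.1.1]

end Defects

/-- Deodhar's defect formula: in `(1+T_{s_{i₁}})⋯(1+T_{s_{i_m}}) = Σ_w a_w T_w`,
each coefficient is `a_w = Σ_π q^{dfct(π)}` over covering path families of type `w`. -/
theorem coeff_eq_defect_sum {n : ℕ} (l : List (Fin n))
    (a : Equiv.Perm (Fin (n + 1)) → A)
    (ha : (l.map fun i => 1 + Ts i).prod = ∑ v, a v • Tw v)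
    (w : Equiv.Perm (Fin (n + 1))) :
    a w = ∑ P ∈ Finset.univ.filter
        (fun P : Fin (l.length + 1) → Equiv.Perm (Fin (n + 1)) =>
          PathFam l P ∧ famType l P = w),
      qq ^ dfct l P := by
  calc a w = regularRep n (∑ v, a v • Tw v) 1 w :=
        (congrFun (regularRep_sum_smul_Tw_row_one a) w).symm
    _ = (l.map (stepMatrix qq)).prod 1 w := by
        rw [← ha, map_list_prod, List.map_map]
        simp only [Function.comp_def, regularRep_one_add_Ts]
    _ = _ := prod_stepMatrix_eq_defect_sum qq l w
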